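/- Let n ≥ 2, let M be the position matrix of a single-shelf shuffle, let B be the n×n matrix with B(k,j) = (k−1)^{\underline{j−1}}, and set T = B^{−1} M B, with rows and columns of T indexed by 0 ≤ j,k ≤ n−1. Then T is upper triangular; its diagonal entries are T(j,j) = 2^{−j} if j is even and T(j,j) = 0 if j is odd; and for 0 ≤ j < k ≤ n−1, T(j,k) = 2^{−1−j} (−1)^j binom(k,j) (n−1−j)!/(n−1−k)!. -/

import Mathlib

/-!
Write `N = n - 1`. The matrix `B` is lower triangular with diagonal entries `j!`, hence invertible,
so it suffices to exhibit the claimed matrix `shelfT n` and to check `M B = B T`.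

Since `j^{\underline k} = k! * binom(j, k)`, the `(i, k)` entry of `2^{i+1} M B` is
`k! * (∑ j, binom(i, j) binom(j, k) + ∑ j, binom(i, j) binom(N - j, k))`. The two sums are
coefficients of `X ^ k` and come from expanding
* `((1 + X) + 1)^i = (X + 2)^i`, which produces the diagonal contribution `2^{-1-k}`
  (`sum_choose_mul_choose`);
* `(1 + X)^{N-i} ((1 + X) + 1)^i = (1 + X)^{N-i} (2 (1 + X) - X)^i`, which produces the signed
  upper triangular contribution (`sum_choose_mul_choose_sub`).

On the diagonal the two contributions are `2^{-1-j}` and `(-1)^j 2^{-1-j}`, which add up to `2^{-j}`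
for even `j` and cancel for odd `j`.
-/

open Matrix BigOperators

/-- Position matrix of a single-shelf shuffle on `n` cards (0-indexed). -/
noncomputable def shelfM (n : ℕ) : Matrix (Fin n) (Fin n) ℝ :=
  fun i j => (1/2 : ℝ)^(i.val + 1) *
    ((Nat.choose i.val j.val : ℝ) + (Nat.choose i.val (n - 1 - j.val) : ℝ))

/-- The change-of-basis matrix `B(k,j) = (k-1)^{\underline{j-1}}` (0-indexed). -/
def Bmat (n : ℕ) : Matrix (Fin n) (Fin n) ℝ :=
  fun k j => (Nat.descFactorial k.val j.val : ℝ)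

open Polynomial in
lemma sum_choose_mul_choose (i k : ℕ) :
    ∑ j ∈ Finset.range (i + 1), (i.choose j : ℝ) * (j.choose k : ℝ) =
      (2 : ℝ) ^ (i - k) * (i.choose k : ℝ) := by
  have h : ∑ j ∈ Finset.range (i + 1), C (i.choose j : ℝ) * (1 + X) ^ j = (X + C (2 : ℝ)) ^ i := by
    have : (X + C (2 : ℝ)) = (1 + X) + 1 := by
      rw [show (2 : ℝ) = 1 + 1 by norm_num, C_add, C_1]; ring
    rw [this, add_pow]
    refine Finset.sum_congr rfl fun j _ => ?_
    simp [mul_comm]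
  have h2 := congrArg (fun p => coeff p k) h
  simpa only [finsetSum_coeff, coeff_C_mul, coeff_one_add_X_pow, coeff_X_add_C_pow] using h2

open Polynomial in
/-- Both sides are the coefficient of `X ^ k` in
`(1 + X)^{N-i} (2 + X)^i = (1 + X)^{N-i} (-X + 2 (1 + X))^i`. -/
lemma sum_choose_mul_choose_sub (N i k : ℕ) (hi : i ≤ N) :
    ∑ j ∈ Finset.range (i + 1), (i.choose j : ℝ) * ((N - j).choose k : ℝ) =
      ∑ t ∈ Finset.range (i + 1), (i.choose t : ℝ) * (2 : ℝ) ^ (i - t) * (-1) ^ t *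
        (if t ≤ k then ((N - t).choose (k - t) : ℝ) else 0) := by
  have h : ∑ j ∈ Finset.range (i + 1), C (i.choose j : ℝ) * (1 + X) ^ (N - j) =
      ∑ t ∈ Finset.range (i + 1), C ((i.choose t : ℝ) * (2 : ℝ) ^ (i - t) * (-1) ^ t) *
        ((1 + X) ^ (N - t) * X ^ t) := by
    have e : (1 + X : ℝ[X]) ^ (N - i) * (1 + (1 + X)) ^ i =
        (1 + X) ^ (N - i) * (-X + C (2 : ℝ) * (1 + X)) ^ i := by
      congr 2
      rw [show (2 : ℝ) = 1 + 1 by norm_num, C_add, C_1]; ring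
    rw [add_pow 1 (1 + X) i, add_pow (-X) _ i, Finset.mul_sum, Finset.mul_sum] at e
    have hN : ∀ t ∈ Finset.range (i + 1),
        (1 + X : ℝ[X]) ^ (N - t) = (1 + X) ^ (N - i) * (1 + X) ^ (i - t) := by
      intro t ht
      have ht' : t < i + 1 := Finset.mem_range.1 ht
      rw [← pow_add]
      congr 1
      omega
    convert e using 1
    · refine Finset.sum_congr rfl fun t ht => ?_
      rw [hN t ht, one_pow, C_eq_natCast]
      ring
    · refine Finset.sum_congr rfl fun t ht => ?_
      rw [hN t ht, neg_pow, mul_pow]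
      simp only [C_mul, C_pow, C_neg, C_1, C_eq_natCast]
      ring
  have h2 := congrArg (fun p => coeff p k) h
  simpa only [finsetSum_coeff, coeff_C_mul, coeff_one_add_X_pow, coeff_mul_X_pow'] using h2

/-- The upper triangular matrix `T`, split into the contributions of the two binomial terms of the
position matrix. Below the diagonal the factor `binom(k, j)` vanishes, so the truncated subtraction
`k - j` is harmless. -/
noncomputable def shelfT (n : ℕ) : Matrix (Fin n) (Fin n) ℝ :=
  fun j k => (if j = k then (1/2 : ℝ) ^ (k.val + 1) else 0) +
    (1/2 : ℝ) ^ (j.val + 1) * (-1) ^ j.val * (k.val.choose j.val : ℝ) *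
      ((n - 1 - j.val).descFactorial (k.val - j.val) : ℝ)

lemma isUnit_det_Bmat (n : ℕ) : IsUnit (Bmat n).det := by
  have h : (Bmat n).BlockTriangular OrderDual.toDual := by
    intro i j hij
    have : i.val < j.val := hij
    simp [Bmat, Nat.descFactorial_eq_zero_iff_lt.2 this]
  rw [Matrix.det_of_isLowerTriangular _ h, isUnit_iff_ne_zero, Finset.prod_ne_zero_iff]
  intro i _
  simp [Bmat, Nat.descFactorial_self, Nat.factorial_ne_zero]

/-- A sum over all positions weighted by `binom(i, ·)` is a sum over `0, …, i`. -/
lemma sum_fin_choose (n : ℕ) (i : Fin n) (f : ℕ → ℝ) :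
    ∑ j : Fin n, (i.val.choose j.val : ℝ) * f j.val =
      ∑ j ∈ Finset.range (i.val + 1), (i.val.choose j : ℝ) * f j := by
  rw [Fin.sum_univ_eq_sum_range (fun j => (i.val.choose j : ℝ) * f j)]
  symm
  refine Finset.sum_subset (Finset.range_mono i.2) fun j _ hj => ?_
  rw [Nat.choose_eq_zero_of_lt (by simpa using hj)]
  simp

lemma descFactorial_cast (a b : ℕ) :
    (a.descFactorial b : ℝ) = (b.factorial : ℝ) * (a.choose b : ℝ) := by
  exact_mod_cast Nat.descFactorial_eq_factorial_mul_choose a b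

lemma shelfM_mul_Bmat (n : ℕ) : shelfM n * Bmat n = Bmat n * shelfT n := by
  ext i k
  have hi : i.val ≤ n - 1 := by omega
  have hL : (shelfM n * Bmat n) i k = (1/2 : ℝ) ^ (i.val + 1) * (k.val.factorial : ℝ) *
      (∑ j ∈ Finset.range (i.val + 1), (i.val.choose j : ℝ) * (j.choose k.val : ℝ) +
       ∑ j ∈ Finset.range (i.val + 1), (i.val.choose j : ℝ) * ((n - 1 - j).choose k.val : ℝ)) := by
    have hrev : ∑ j : Fin n, (i.val.choose (n - 1 - j.val) : ℝ) * (j.val.choose k.val : ℝ) =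
        ∑ j : Fin n, (i.val.choose j.val : ℝ) * ((n - 1 - j.val).choose k.val : ℝ) := by
      rw [← Equiv.sum_comp Fin.revPerm]
      refine Finset.sum_congr rfl fun j _ => ?_
      have h1 : n - 1 - (Fin.revPerm j).val = j.val := by simp [Fin.val_rev]; omega
      have h2 : (Fin.revPerm j).val = n - 1 - j.val := by simp [Fin.val_rev]; omega
      rw [h1, h2]
    rw [← sum_fin_choose n i fun j => (j.choose k.val : ℝ),
      ← sum_fin_choose n i fun j => ((n - 1 - j).choose k.val : ℝ), ← hrev,
      ← Finset.sum_add_distrib, Finset.mul_sum, Matrix.mul_apply]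
    refine Finset.sum_congr rfl fun j _ => ?_
    simp only [shelfM, Bmat, descFactorial_cast]
    ring
  have hR : (Bmat n * shelfT n) i k =
      (i.val.descFactorial k.val : ℝ) * (1/2 : ℝ) ^ (k.val + 1) +
      ∑ t ∈ Finset.range (i.val + 1), (i.val.choose t : ℝ) * ((t.factorial : ℝ) *
        ((1/2 : ℝ) ^ (t + 1) * (-1) ^ t * (k.val.choose t : ℝ) *
          ((n - 1 - t).descFactorial (k.val - t) : ℝ))) := by
    rw [← sum_fin_choose n i fun t => ((t.factorial : ℝ) *
        ((1/2 : ℝ) ^ (t + 1) * (-1) ^ t * (k.val.choose t : ℝ) *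
          ((n - 1 - t).descFactorial (k.val - t) : ℝ))), Matrix.mul_apply]
    simp only [shelfT, mul_add, Finset.sum_add_distrib]
    congr 1
    · simp [Bmat]
    · refine Finset.sum_congr rfl fun t _ => ?_
      simp only [Bmat]
      rw [descFactorial_cast i.val t.val]
      ring
  have hpow : ∀ t ≤ i.val, (1/2 : ℝ) ^ (i.val + 1) * 2 ^ (i.val - t) = (1/2 : ℝ) ^ (t + 1) := by
    intro t ht
    obtain ⟨d, hd⟩ := Nat.exists_eq_add_of_le ht
    rw [hd, Nat.add_sub_cancel_left, show t + d + 1 = t + 1 + d by ring, pow_add _ (t + 1) d,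
      mul_assoc, ← mul_pow]
    norm_num
  rw [hL, hR, sum_choose_mul_choose, sum_choose_mul_choose_sub _ _ _ hi, mul_add]
  congr 1
  · rcases le_or_gt k.val i.val with h | h
    · rw [descFactorial_cast, ← hpow _ h]; ring
    · simp [Nat.choose_eq_zero_of_lt h, Nat.descFactorial_eq_zero_iff_lt.2 h]
  · rw [Finset.mul_sum]
    refine Finset.sum_congr rfl fun t ht => ?_
    have ht' : t ≤ i.val := by simpa [Nat.lt_succ_iff] using ht
    split_ifs with htk
    · rw [← hpow t ht', descFactorial_cast (n - 1 - t)]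
      have : (k.val.factorial : ℝ) = k.val.choose t * t.factorial * (k.val - t).factorial := by
        exact_mod_cast (Nat.choose_mul_factorial_mul_factorial htk).symm
      rw [this]
      ring
    · simp [Nat.choose_eq_zero_of_lt (not_le.1 htk)]

theorem T_upper_triangular (n : ℕ) (hn : 2 ≤ n) :
    (∀ j k : Fin n, k.val < j.val → ((Bmat n)⁻¹ * shelfM n * Bmat n) j k = 0) ∧
    (∀ j : Fin n, ((Bmat n)⁻¹ * shelfM n * Bmat n) j j =
      if Even j.val then (1/2 : ℝ)^j.val else 0) ∧
    (∀ j k : Fin n, j.val < k.val →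
      ((Bmat n)⁻¹ * shelfM n * Bmat n) j k =
        (1/2 : ℝ)^(j.val + 1) * (-1 : ℝ)^j.val * (Nat.choose k.val j.val : ℝ) *
          (Nat.factorial (n - 1 - j.val) : ℝ) / (Nat.factorial (n - 1 - k.val) : ℝ)) := by
  have hT : (Bmat n)⁻¹ * shelfM n * Bmat n = shelfT n := by
    rw [Matrix.mul_assoc, shelfM_mul_Bmat, Matrix.nonsing_inv_mul_cancel_left _ _
      (isUnit_det_Bmat n)]
  rw [hT]
  refine ⟨fun j k h => ?_, fun j => ?_, fun j k h => ?_⟩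
  · have hne : j ≠ k := fun e => by simp [e] at h
    simp [shelfT, hne, Nat.choose_eq_zero_of_lt h]
  · rcases Nat.even_or_odd j.val with h | h
    · simp only [shelfT, h, h.neg_one_pow, if_true, Nat.choose_self, Nat.sub_self,
        Nat.descFactorial_zero, pow_succ]
      push_cast
      ring
    · simp [shelfT, h.neg_one_pow, Nat.not_even_iff_odd.2 h]
  · have hne : j ≠ k := fun e => by simp [e] at h
    have hk : k.val - j.val ≤ n - 1 - j.val := by omega
    have hf := Nat.factorial_mul_descFactorial hk
    rw [show n - 1 - j.val - (k.val - j.val) = n - 1 - k.val by omega] at hf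
    have hf' : ((n - 1 - k.val).factorial : ℝ) *
        ((n - 1 - j.val).descFactorial (k.val - j.val) : ℝ) = (n - 1 - j.val).factorial := by
      exact_mod_cast hf
    rw [← hf']
    have := Nat.factorial_ne_zero (n - 1 - k.val)
    simp only [shelfT, hne, if_false, zero_add]
    field_simp
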